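/- arXiv:1302.1386 — 4 statements merged into one kernel-verified Lean document; each statement's English description precedes it below -/
import Mathlib

section
/- Let T be a tree rooted at r, and let V_1, V_2 ⊆ V(T) be disjoint sets of equal size such that V_1 and V_2 induce in T collections of vertex-disjoint paths 𝒫_1 and 𝒫_2 respectively, and there is a bijection between 𝒫_1 and 𝒫_2 mapping each path starting at a vertex v to a path of the same length starting at a sibling of v (a vertex with the same parent, hence at the same distance from r). If every pair of distinct paths in 𝒫_1 ∪ 𝒫_2 is independent, then V_1 and V_2 are homometric sets of T. -/
/-- The profile of a finite vertex set: the multiset of pairwise distances (in `G`)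
between (distinct) vertices of the set. -/
noncomputable def SimpleGraph.profile {V : Type*} [DecidableEq V] (G : SimpleGraph V)
    (s : Finset V) : Multiset ℕ :=
  s.offDiag.val.map fun p => G.dist p.1 p.2

/-- In the tree `G` rooted at `r`, the vertex `p` is the parent of `v`:
`p` is adjacent to `v` and one step closer to the root. -/
def SimpleGraph.IsParentOf {V : Type*} (G : SimpleGraph V) (r p v : V) : Prop :=
  G.Adj p v ∧ G.dist r p + 1 = G.dist r v

/-- In the tree `G` rooted at `r`, the vertices `u` and `v` are siblings:
they have a common parent (hence the same distance from the root). -/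
def SimpleGraph.AreSiblings {V : Type*} (G : SimpleGraph V) (r u v : V) : Prop :=
  ∃ p, G.IsParentOf r p u ∧ G.IsParentOf r p v

/-- A nonempty list of vertices forming a path in `G` (consecutive vertices
adjacent, no repetitions). -/
def SimpleGraph.IsPathList {V : Type*} (G : SimpleGraph V) (P : List V) : Prop :=
  P ≠ [] ∧ P.Chain' G.Adj ∧ P.Nodup

/-- In the tree `G` rooted at `r`, a vertex is a leaf if it has no children. -/
def SimpleGraph.IsRootedLeaf {V : Type*} (G : SimpleGraph V) (r v : V) : Prop :=
  ∀ w, ¬ G.IsParentOf r v w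

/-- A root-to-leaf path of the tree `G` rooted at `r`, given as a list of vertices. -/
def SimpleGraph.IsRootLeafPath {V : Type*} (G : SimpleGraph V) (r : V) (P : List V) : Prop :=
  G.IsPathList P ∧ P.head? = some r ∧ ∃ v, P.getLast? = some v ∧ G.IsRootedLeaf r v

/-- Two paths of the tree `G` rooted at `r` are independent if no root-to-leaf path
of `G` shares a vertex with both of them. -/
def SimpleGraph.IndependentPaths {V : Type*} (G : SimpleGraph V) (r : V)
    (P Q : List V) : Prop :=
  ¬ ∃ R : List V, G.IsRootLeafPath r R ∧ (∃ a ∈ R, a ∈ P) ∧ ∃ b ∈ R, b ∈ Q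

/-!
If two paths hang from vertices `p` and `q` and lie in separate branches of the tree, then the
geodesic from the `k`-th vertex of the one to the `l`-th vertex of the other climbs to `p`, crosses
to `q` and descends, so it has length `(k + 1) + dist p q + (l + 1)`. Within one path the distance
is `|k - l|`. Both numbers depend only on the positions of the vertices and on the parents `p`,
`q`, which matched paths share, so matching positions preserves all distances.
-/
namespace PairingLemma

open SimpleGraph Function

section Profile

variable {V W S : Type*}

lemma offDiag_map (e : S ↪ V) (s : Finset S) :
    (s.map e).offDiag = s.offDiag.map (e.prodMap e) := by
  ext ⟨x, y⟩
  simp only [Finset.mem_offDiag, Finset.mem_map, Prod.exists, Embedding.coe_prodMap,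
    Prod.map_apply, Prod.mk.injEq]
  grind

lemma profile_map [DecidableEq V] (G : SimpleGraph V) (e : S ↪ V) (s : Finset S) :
    G.profile (s.map e) = s.offDiag.val.map fun p => G.dist (e p.1) (e p.2) := by
  rw [profile, offDiag_map, Finset.map_val, Multiset.map_map]
  rfl

lemma profile_eq_of_dist_eq [DecidableEq V] [DecidableEq W] {G : SimpleGraph V}
    {H : SimpleGraph W} {f : S → V} {g : S → W} (hf : Injective f) (hg : Injective g)
    {A : Finset V} {B : Finset W} (hA : Set.range f = A) (hB : Set.range g = B)
    (hdist : ∀ s t, G.dist (f s) (f t) = H.dist (g s) (g t)) : G.profile A = H.profile B := by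
  have : Finite (Set.range f) := hA ▸ A.finite_toSet
  have : Finite S := (Set.finite_range_iff hf).1 this
  have := Fintype.ofFinite S
  obtain rfl : A = Finset.univ.map ⟨f, hf⟩ := by
    rw [← Finset.coe_inj, ← hA, Finset.coe_map, Finset.coe_univ, Set.image_univ, Embedding.coeFn_mk]
  obtain rfl : B = Finset.univ.map ⟨g, hg⟩ := by
    rw [← Finset.coe_inj, ← hB, Finset.coe_map, Finset.coe_univ, Set.image_univ, Embedding.coeFn_mk]
  rw [profile_map, profile_map]
  exact Multiset.map_congr rfl fun s _ => hdist s.1 s.2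

end Profile

section Entry

variable {α ι : Type*} {P : ι → List α}

/-- The enumeration of all entries of a family of lists by their positions: `⟨i, k⟩` is the `k`-th
position of the `i`-th list. -/
def entry (P : ι → List α) (s : Σ i, Fin (P i).length) : α :=
  (P s.1)[s.2]

lemma range_entry (P : ι → List α) : Set.range (entry P) = {x | ∃ i, x ∈ P i} := by
  ext x
  simp [entry, List.mem_iff_getElem, Fin.exists_iff]

lemma entry_injective (hnodup : ∀ i, (P i).Nodup)
    (hdisj : Pairwise fun i j => (P i).Disjoint (P j)) : Injective (entry P) := by
  rintro ⟨i, k⟩ ⟨j, l⟩ (hkl : (P i)[k] = (P j)[l])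
  have hij : i = j := by
    by_contra hne
    exact hdisj hne (List.getElem_mem k.2) (hkl ▸ List.getElem_mem l.2 : (P i)[k] ∈ P j)
  subst hij
  have hkl : k = l := Fin.ext ((hnodup i).getElem_inj_iff.1 hkl)
  rw [hkl]

end Entry

variable {V : Type*} {G : SimpleGraph V}

section Distance

lemma length_eq_dist_of_isPath (hG : G.IsAcyclic) {a b : V} {w : G.Walk a b} (hw : w.IsPath) :
    w.length = G.dist a b := by
  obtain ⟨w', hw', hlen⟩ := w.reachable.exists_path_of_dist
  have : w = w' :=
    congrArg Subtype.val ((hG.subsingleton_path a b).elim ⟨w, hw⟩ ⟨w', hw'⟩)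
  rw [this, hlen]

lemma dist_getVert_of_isPath (hG : G.IsAcyclic) {a b : V} {w : G.Walk a b} (hw : w.IsPath)
    {k l : ℕ} (hkl : k ≤ l) (hl : l ≤ w.length) :
    G.dist (w.getVert k) (w.getVert l) = l - k := by
  have hlen := length_eq_dist_of_isPath hG ((hw.drop k).take (l - k))
  simp only [Walk.take_length, Walk.drop_length, Walk.drop_getVert, Nat.add_sub_of_le hkl] at hlen
  omega

lemma dist_getElem_of_isPathList (hG : G.IsAcyclic) {P : List V} (hP : G.IsPathList P) {k l : ℕ}
    (hk : k < P.length) (hl : l < P.length) : G.dist P[k] P[l] = Nat.dist k l := by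
  wlog hkl : k ≤ l generalizing k l
  · rw [dist_comm, this hl hk (by omega), Nat.dist_comm]
  let w := Walk.ofSupport P hP.1 hP.2.1
  have hsupport : w.support = P := Walk.support_ofSupport hP.1 hP.2.1
  have hlength : w.length = P.length - 1 := Walk.length_ofSupport hP.1 hP.2.1
  have hw : w.IsPath := by
    rw [Walk.isPath_def, hsupport]
    exact hP.2.2
  have hgetVert {m : ℕ} (hm : m < P.length) : w.getVert m = P[m] := by
    rw [w.getVert_eq_support_getElem (by omega)]
    simp only [hsupport]
  rw [← hgetVert hk, ← hgetVert hl, dist_getVert_of_isPath hG hw hkl (by omega),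
    Nat.dist_eq_sub_of_le hkl]

lemma dist_eq_add_of_adj (hG : G.IsTree) {x y u p : V} (hadj : G.Adj u p)
    (hx : G.dist x p = G.dist x u + 1) (hy : G.dist y u = G.dist y p + 1) :
    G.dist x y = G.dist x p + G.dist p y := by
  obtain ⟨w, hlen⟩ := hG.connected.exists_walk_length_eq_dist x u
  obtain ⟨w', hlen'⟩ := hG.connected.exists_walk_length_eq_dist p y
  have hw : (w.append (.cons hadj .nil)).IsPath := by
    apply Walk.isPath_of_length_eq_dist
    simp [hlen, hx]
  have hw' : (Walk.cons hadj w').IsPath := by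
    apply Walk.isPath_of_length_eq_dist
    rw [Walk.length_cons, hlen', dist_comm, ← hy, dist_comm]
  -- In an acyclic graph a walk is a path as soon as it does not backtrack, a local condition.
  have hpath : (w.append (.cons hadj w')).IsPath := by
    simp only [hG.isAcyclic.isPath_iff_isChain, Walk.edges_append, Walk.edges_cons] at hw hw' ⊢
    exact List.isChain_split.2 ⟨hw, hw'⟩
  have hlength := length_eq_dist_of_isPath hG.isAcyclic hpath
  rw [Walk.length_append, Walk.length_cons] at hlength
  omega

end Distance

section Ancestor

variable {r : V}

/-- In the tree `G` rooted at `r`, the vertex `a` is an ancestor of `b`, or equal to it: `a` lies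
on a geodesic from `r` to `b`. -/
def IsAncestor (G : SimpleGraph V) (r a b : V) : Prop :=
  G.dist r a + G.dist a b = G.dist r b

/-- The paths `P` and `Q` lie in separate branches of the tree `G` rooted at `r`: no vertex of one
is an ancestor of, or equal to, a vertex of the other. Unlike independence, this notion does not
depend on the existence of leaves. -/
def Incomparable (G : SimpleGraph V) (r : V) (P Q : List V) : Prop :=
  ∀ a ∈ P, ∀ b ∈ Q, ¬ IsAncestor G r a b ∧ ¬ IsAncestor G r b a

lemma IsAncestor.refl (a : V) : IsAncestor G r a a := by
  simp [IsAncestor]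

lemma IsAncestor.trans (hG : G.Connected) {a b c : V} (hab : IsAncestor G r a b)
    (hbc : IsAncestor G r b c) : IsAncestor G r a c := by
  have := hG.dist_triangle (u := r) (v := a) (w := c)
  have := hG.dist_triangle (u := a) (v := b) (w := c)
  unfold IsAncestor at *
  omega

lemma isAncestor_of_isParentOf {p v : V} (h : G.IsParentOf r p v) : IsAncestor G r p v := by
  rw [IsAncestor, dist_eq_one_iff_adj.2 h.1, h.2]

lemma isAncestor_of_dist_eq_add_one (hG : G.IsTree) {p u x : V} (hp : G.IsParentOf r p u)
    (hx : G.dist x p = G.dist x u + 1) : IsAncestor G r u x := by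
  have hxr := dist_eq_add_of_adj hG hp.1.symm hx hp.2.symm
  have := hp.2
  rw [IsAncestor, dist_comm (u := u), dist_comm (v := x), hxr, dist_comm (u := p)]
  omega

lemma Incomparable.disjoint {P Q : List V} (h : Incomparable G r P Q) : P.Disjoint Q :=
  fun a haP haQ => (h a haP a haQ).1 (.refl a)

end Ancestor

section RootLeafPath

variable {r : V}

lemma exists_isRootedLeaf_isAncestor [Finite V] (hG : G.Connected) (b : V) :
    ∃ c, G.IsRootedLeaf r c ∧ IsAncestor G r b c := by
  obtain ⟨c, hbc, hmax⟩ :=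
    (Set.toFinite {c | IsAncestor G r b c}).exists_maximalFor (G.dist r) _ ⟨b, .refl b⟩
  refine ⟨c, fun d hcd => ?_, hbc⟩
  have := hmax (hbc.trans hG (isAncestor_of_isParentOf hcd))
  have := hcd.2
  omega

lemma exists_isRootLeafPath_of_isAncestor [Finite V] (hG : G.Connected) {a b : V}
    (hab : IsAncestor G r a b) : ∃ R, G.IsRootLeafPath r R ∧ a ∈ R ∧ b ∈ R := by
  obtain ⟨c, hc, hbc⟩ := exists_isRootedLeaf_isAncestor (r := r) hG b
  obtain ⟨w₁, h₁⟩ := hG.exists_walk_length_eq_dist r a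
  obtain ⟨w₂, h₂⟩ := hG.exists_walk_length_eq_dist a b
  obtain ⟨w₃, h₃⟩ := hG.exists_walk_length_eq_dist b c
  let w := w₁.append (w₂.append w₃)
  have hw : w.IsPath := by
    apply Walk.isPath_of_length_eq_dist
    rw [Walk.length_append, Walk.length_append, h₁, h₂, h₃, ← hbc, ← hab, add_assoc]
  refine ⟨w.support, ⟨⟨w.support_ne_nil, w.isChain_adj_support, hw.support_nodup⟩, ?_, c, ?_, hc⟩,
    ?_, ?_⟩
  · rw [List.head?_eq_some_head w.support_ne_nil, Walk.head_support]
  · rw [List.getLast?_eq_some_getLast w.support_ne_nil, Walk.getLast_support]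
  all_goals simp [w, Walk.mem_support_append_iff]

lemma incomparable_of_independentPaths [Finite V] (hG : G.Connected) {P Q : List V}
    (h : G.IndependentPaths r P Q) : Incomparable G r P Q := by
  refine fun a ha b hb => ⟨fun hab => ?_, fun hba => ?_⟩
  · obtain ⟨R, hR, haR, hbR⟩ := exists_isRootLeafPath_of_isAncestor hG hab
    exact h ⟨R, hR, ⟨a, haR, ha⟩, b, hbR, hb⟩
  · obtain ⟨R, hR, hbR, haR⟩ := exists_isRootLeafPath_of_isAncestor hG hba
    exact h ⟨R, hR, ⟨a, haR, ha⟩, b, hbR, hb⟩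

end RootLeafPath

section HangsFrom

variable {r p q : V} {P Q : List V}

/-- In the tree `G` rooted at `r`, the list `P` is a path that hangs from `p`: it starts at a child
of `p` and avoids `p`, hence descends. -/
structure HangsFrom (G : SimpleGraph V) (r p : V) (P : List V) : Prop where
  isPathList_cons : G.IsPathList (p :: P)
  exists_head : ∃ u, P.head? = some u ∧ G.IsParentOf r p u

lemma hangsFrom_of_notMem {u : V} (hP : G.IsPathList P) (hu : P.head? = some u)
    (hp : G.IsParentOf r p u) (hpP : p ∉ P) : HangsFrom G r p P where
  isPathList_cons := by
    obtain ⟨l, rfl⟩ := List.head?_eq_some_iff.1 hu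
    exact ⟨List.cons_ne_nil _ _, List.isChain_cons_cons.2 ⟨hp.1, hP.2.1⟩,
      List.nodup_cons.2 ⟨hpP, hP.2.2⟩⟩
  exists_head := ⟨u, hu, hp⟩

lemma exists_hangsFrom_of_areSiblings {u v : V} (hP : G.IsPathList P) (hQ : G.IsPathList Q)
    (hu : P.head? = some u) (hv : Q.head? = some v) (huv : G.AreSiblings r u v)
    (hPQ : Incomparable G r P Q) : ∃ p, HangsFrom G r p P ∧ HangsFrom G r p Q := by
  obtain ⟨p, hpu, hpv⟩ := huv
  have hpP : p ∉ P := fun h =>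
    (hPQ p h v (List.mem_of_head? hv)).1 (isAncestor_of_isParentOf hpv)
  have hpQ : p ∉ Q := fun h =>
    (hPQ u (List.mem_of_head? hu) p h).2 (isAncestor_of_isParentOf hpu)
  exact ⟨p, hangsFrom_of_notMem hP hu hpu hpP, hangsFrom_of_notMem hQ hv hpv hpQ⟩

lemma HangsFrom.isPathList (h : HangsFrom G r p P) : G.IsPathList P := by
  obtain ⟨u, hu, -⟩ := h.exists_head
  obtain ⟨-, hchain, hnodup⟩ := h.isPathList_cons
  exact ⟨by rintro rfl; simp at hu, hchain.of_cons, hnodup.of_cons⟩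

lemma HangsFrom.dist_getElem_parent (hP : HangsFrom G r p P) (hG : G.IsAcyclic) {k : ℕ}
    (hk : k < P.length) : G.dist P[k] p = k + 1 :=
  (dist_getElem_of_isPathList hG hP.isPathList_cons (Nat.succ_lt_succ hk) (Nat.succ_pos _)).trans
    (Nat.dist_zero_right _)

lemma HangsFrom.dist_getElem (hP : HangsFrom G r p P) (hG : G.IsTree) {k : ℕ}
    (hk : k < P.length) {y : V} (hy : ∀ a ∈ P, ¬ IsAncestor G r a y) :
    G.dist P[k] y = k + 1 + G.dist p y := by
  obtain ⟨u, hu, hpu⟩ := hP.exists_head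
  have hxp := hP.dist_getElem_parent hG.isAcyclic hk
  have hxu : G.dist P[k] u = k := by
    obtain ⟨l, rfl⟩ := List.head?_eq_some_iff.1 hu
    exact (dist_getElem_of_isPathList hG.isAcyclic hP.isPathList hk (Nat.succ_pos _)).trans
      (Nat.dist_zero_right _)
  have hyp : G.dist y u = G.dist y p + 1 :=
    (hG.dist_eq_dist_add_one_of_adj y hpu.1).resolve_left fun h =>
      hy u (List.mem_of_head? hu) (isAncestor_of_dist_eq_add_one hG hpu h)
  rw [dist_eq_add_of_adj hG hpu.1.symm (by omega) hyp, hxp]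

lemma HangsFrom.dist_getElem_getElem (hP : HangsFrom G r p P) (hQ : HangsFrom G r q Q)
    (hG : G.IsTree) (hPQ : Incomparable G r P Q) {k l : ℕ} (hk : k < P.length)
    (hl : l < Q.length) : G.dist P[k] Q[l] = k + 1 + (l + 1 + G.dist p q) := by
  have hQl : ∀ a ∈ P, ¬ IsAncestor G r a Q[l] := fun a ha => (hPQ a ha _ (List.getElem_mem hl)).1
  have hp : ∀ b ∈ Q, ¬ IsAncestor G r b p := by
    intro b hb hbp
    obtain ⟨u, hu, hpu⟩ := hP.exists_head
    exact (hPQ u (List.mem_of_head? hu) b hb).2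
      (hbp.trans hG.connected (isAncestor_of_isParentOf hpu))
  rw [hP.dist_getElem hG hk hQl, dist_comm, hQ.dist_getElem hG hl hp, dist_comm]

lemma dist_entry {ι : Type*} [DecidableEq ι] {P : ι → List V} {p : ι → V} (hG : G.IsTree)
    (hP : ∀ i, HangsFrom G r (p i) (P i))
    (hind : Pairwise fun i j => Incomparable G r (P i) (P j)) (s t : Σ i, Fin (P i).length) :
    G.dist (entry P s) (entry P t) =
      if s.1 = t.1 then Nat.dist s.2 t.2 else s.2 + 1 + (t.2 + 1 + G.dist (p s.1) (p t.1)) := by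
  obtain ⟨i, k⟩ := s
  obtain ⟨j, l⟩ := t
  split_ifs with hij
  · obtain rfl : i = j := hij
    exact dist_getElem_of_isPathList hG.isAcyclic (hP i).isPathList k.2 l.2
  · exact (hP i).dist_getElem_getElem (hP j) hG (hind hij) k.2 l.2

end HangsFrom

end PairingLemma

open PairingLemma in
theorem pairing_homometric_general {V : Type*} [DecidableEq V] (G : SimpleGraph V)
    (hG : G.IsTree) (r : V) {ι : Type*} (P₁ P₂ : ι → List V) (V₁ V₂ : Finset V)
    (hpath₁ : ∀ i, G.IsPathList (P₁ i)) (hpath₂ : ∀ i, G.IsPathList (P₂ i))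
    (hV₁ : ∀ x, x ∈ V₁ ↔ ∃ i, x ∈ P₁ i)
    (hV₂ : ∀ x, x ∈ V₂ ↔ ∃ i, x ∈ P₂ i)
    (hlen : ∀ i, (P₁ i).length = (P₂ i).length)
    (hsib : ∀ i, ∃ u v, (P₁ i).head? = some u ∧ (P₂ i).head? = some v ∧ G.AreSiblings r u v)
    (hind₁ : Pairwise fun i j => Incomparable G r (P₁ i) (P₁ j))
    (hind₂ : Pairwise fun i j => Incomparable G r (P₂ i) (P₂ j))
    (hind₁₂ : ∀ i, Incomparable G r (P₁ i) (P₂ i)) :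
    G.profile V₁ = G.profile V₂ := by
  classical
  have hhang (i : ι) : ∃ p, HangsFrom G r p (P₁ i) ∧ HangsFrom G r p (P₂ i) := by
    obtain ⟨u, v, hu, hv, huv⟩ := hsib i
    exact exists_hangsFrom_of_areSiblings (hpath₁ i) (hpath₂ i) hu hv huv (hind₁₂ i)
  choose p hp₁ hp₂ using hhang
  have hinj₁ := entry_injective (fun i => (hpath₁ i).2.2) fun _ _ hij => (hind₁ hij).disjoint
  have hinj₂ := entry_injective (fun i => (hpath₂ i).2.2) fun _ _ hij => (hind₂ hij).disjoint
  let e : (Σ i, Fin (P₁ i).length) ≃ Σ i, Fin (P₂ i).length :=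
    Equiv.sigmaCongrRight fun i => finCongr (hlen i)
  refine profile_eq_of_dist_eq hinj₁ (hinj₂.comp e.injective) ?_ ?_ fun s t => ?_
  · rw [range_entry]
    exact Set.ext fun x => (hV₁ x).symm
  · rw [e.surjective.range_comp, range_entry]
    exact Set.ext fun x => (hV₂ x).symm
  · rw [Function.comp_apply, Function.comp_apply, dist_entry hG hp₁ hind₁, dist_entry hG hp₂ hind₂]
    rfl

/-- Pairing lemma: let `G` be a tree rooted at `r`, and let `V₁, V₂` be disjoint
equicardinal vertex sets inducing collections of vertex-disjoint paths
`P₁ i` (partitioning `V₁`) and `P₂ i` (partitioning `V₂`), indexed by the same finite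
type `ι` (this encodes the bijection), such that for each `i` the paths `P₁ i` and
`P₂ i` have the same length and start at sibling vertices.  If every pair of distinct
paths of the collection `P₁ ∪ P₂` is independent, then `V₁` and `V₂` are homometric
sets of `G`. -/
theorem pairing_homometric {V : Type*} [Fintype V] [DecidableEq V]
    (G : SimpleGraph V) (hG : G.IsTree) (r : V)
    {ι : Type*} [Fintype ι] (P₁ P₂ : ι → List V) (V₁ V₂ : Finset V)
    (hdisj : Disjoint V₁ V₂) (hcard : V₁.card = V₂.card)
    (hpath₁ : ∀ i, G.IsPathList (P₁ i)) (hpath₂ : ∀ i, G.IsPathList (P₂ i))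
    (hpd₁ : ∀ i j, i ≠ j → ∀ x, x ∈ P₁ i → x ∉ P₁ j)
    (hpd₂ : ∀ i j, i ≠ j → ∀ x, x ∈ P₂ i → x ∉ P₂ j)
    (hV₁ : ∀ x, x ∈ V₁ ↔ ∃ i, x ∈ P₁ i)
    (hV₂ : ∀ x, x ∈ V₂ ↔ ∃ i, x ∈ P₂ i)
    (hlen : ∀ i, (P₁ i).length = (P₂ i).length)
    (hsib : ∀ i, ∃ u v, (P₁ i).head? = some u ∧ (P₂ i).head? = some v ∧
      G.AreSiblings r u v)
    (hind₁ : ∀ i j, i ≠ j → G.IndependentPaths r (P₁ i) (P₁ j))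
    (hind₂ : ∀ i j, i ≠ j → G.IndependentPaths r (P₂ i) (P₂ j))
    (hind₁₂ : ∀ i j, G.IndependentPaths r (P₁ i) (P₂ j)) :
    Disjoint V₁ V₂ ∧ G.profile V₁ = G.profile V₂ :=
  ⟨hdisj, pairing_homometric_general G hG r P₁ P₂ V₁ V₂ hpath₁ hpath₂ hV₁ hV₂ hlen hsib
    (fun i j hij => PairingLemma.incomparable_of_independentPaths hG.connected (hind₁ i j hij))
    (fun i j hij => PairingLemma.incomparable_of_independentPaths hG.connected (hind₂ i j hij))
    fun i => PairingLemma.incomparable_of_independentPaths hG.connected (hind₁₂ i i)⟩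
end

section
/- For every tree T = (V,E) rooted at a vertex r, f(T_r) ≥ |V| / (2·h(T_r)) − 1/2. -/
/-- Finite rooted trees: a node together with the list of subtrees of its children. -/
inductive RTree : Type where
  | node : List RTree → RTree

namespace RTree

/-- `h t` is the number of vertices on a longest path starting at the root
(so a single vertex has `h = 1`). -/
def h : RTree → ℕ
  | node cs => 1 + (cs.attach.map fun c => h c.1).foldr max 0
decreasing_by simp only [node.sizeOf_spec]; have := List.sizeOf_lt_of_mem c.2; omega

/-- The number of vertices of a rooted tree. -/
def size : RTree → ℕ
  | node cs => 1 + (cs.attach.map fun c => size c.1).sum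
decreasing_by simp only [node.sizeOf_spec]; have := List.sizeOf_lt_of_mem c.2; omega

/-- The pairing function `f`: `f t = 0` if `t` has at most one vertex; otherwise, with
the heights of the subtrees rooted at the children listed in non-increasing order
`g₁ ≥ g₂ ≥ …` (padding with the height-`0` empty tree to make the number of entries
even, which does not change the sum below), `f t` is the maximum of `Σᵢ f(Tᵢ)` over all
children subtrees `Tᵢ`, and of `g₂ + g₄ + g₆ + …`. -/
def f : RTree → ℕ
  | node cs =>
    if cs.isEmpty then 0
    else
      let hs : List ℕ :=
        (((cs.attach.map fun c => h c.1 : List ℕ) : Multiset ℕ).sort (· ≤ ·)).reverse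
      max ((cs.attach.map fun c => f c.1).sum)
        (∑ i ∈ Finset.range hs.length, if i % 2 = 1 then hs.getD i 0 else 0)
decreasing_by simp only [node.sizeOf_spec]; have := List.sizeOf_lt_of_mem c.2; omega

end RTree

/-!
If the children of a vertex have heights `g₁ ≥ g₂ ≥ g₃ ≥ …`, then `g₃ ≤ g₂`, `g₅ ≤ g₄`, …, so
`g₁ + g₂ + g₃ + … ≤ g₁ + 2 (g₂ + g₄ + …)`. The second branch of the maximum in `f` therefore pays
for the heights of the children, while the first branch pays for the rest of their subtrees. This
gives `|V| ≤ 2 h f + h` by induction on the tree, the root being counted by `h = 1 + g₁`.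
-/

section EvenPlaceSum

variable {α : Type*} [AddCommMonoid α]

/-- The sum `g₂ + g₄ + g₆ + …` of the entries in the even places of a list `[g₁, g₂, g₃, …]`, that
is, at the odd zero-based indices. It is stated as a sum over indices to match `RTree.f`. -/
def evenPlaceSum (l : List α) : α :=
  ∑ i ∈ Finset.range l.length, if i % 2 = 1 then l.getD i 0 else 0

@[simp]
theorem evenPlaceSum_nil : evenPlaceSum ([] : List α) = 0 := rfl

@[simp]
theorem evenPlaceSum_singleton (a : α) : evenPlaceSum [a] = 0 := by
  simp [evenPlaceSum]

@[simp]
theorem evenPlaceSum_cons_cons (a b : α) (l : List α) :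
    evenPlaceSum (a :: b :: l) = b + evenPlaceSum l := by
  have parity (i : ℕ) : (i + 1 + 1) % 2 = i % 2 := Nat.add_mod_right i 2
  simp [evenPlaceSum, Finset.sum_range_succ', parity, add_comm b]

theorem sum_le_add_two_nsmul_evenPlaceSum [Preorder α] [IsOrderedAddMonoid α] {m : α} {l : List α}
    (hl : (m :: l).SortedGE) (hnonneg : ∀ x ∈ m :: l, 0 ≤ x) :
    l.sum ≤ m + 2 • evenPlaceSum l := by
  induction l using List.twoStepInduction generalizing m with
  | nil => simpa using hnonneg
  | singleton a => simpa using hl.pairwise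
  | cons_cons a b l ih _ =>
    have ham : a ≤ m := List.rel_of_pairwise_cons hl.pairwise List.mem_cons_self
    have ih : l.sum ≤ b + 2 • evenPlaceSum l :=
      ih hl.pairwise.of_cons.of_cons.sortedGE fun x hx =>
        hnonneg x (List.mem_cons_of_mem _ (List.mem_cons_of_mem _ hx))
    calc (a :: b :: l).sum = a + (b + l.sum) := by simp only [List.sum_cons]
      _ ≤ m + (b + (b + 2 • evenPlaceSum l)) := by gcongr
      _ = m + 2 • evenPlaceSum (a :: b :: l) := by
        rw [evenPlaceSum_cons_cons, nsmul_add, two_nsmul b, add_assoc b]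

end EvenPlaceSum

namespace RTree

@[elab_as_elim]
theorem induction_on_children {motive : RTree → Prop} (t : RTree)
    (node : ∀ cs, (∀ c ∈ cs, motive c) → motive (node cs)) : motive t :=
  RTree.rec (motive_2 := fun cs => ∀ c ∈ cs, motive c) node (by simp)
    (fun _ _ hc hcs => List.forall_mem_cons.2 ⟨hc, hcs⟩) t

theorem h_node (cs : List RTree) : (node cs).h = 1 + (cs.map h).foldr max 0 := by
  rw [h, List.attach_map_val (f := h)]

theorem size_node (cs : List RTree) : (node cs).size = 1 + (cs.map size).sum := by
  rw [size, List.attach_map_val (f := size)]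

theorem h_pos (t : RTree) : 0 < t.h := by
  cases t
  rw [h_node]
  exact Nat.add_pos_left one_pos _

theorem h_lt_h_node {c : RTree} {cs : List RTree} (hc : c ∈ cs) : c.h < (node cs).h := by
  rw [h_node, Nat.lt_one_add_iff]
  exact List.le_max_of_le' 0 (List.mem_map_of_mem hc) le_rfl

/-- The heights `g₁ ≥ g₂ ≥ …` of a list of rooted trees in non-increasing order, written as in the
definition of `RTree.f`. -/
def sortedHeights (cs : List RTree) : List ℕ :=
  (((cs.map h : List ℕ) : Multiset ℕ).sort (· ≤ ·)).reverse

theorem sortedHeights_perm (cs : List RTree) : (sortedHeights cs).Perm (cs.map h) :=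
  (List.reverse_perm _).trans (Multiset.coe_eq_coe.1 (Multiset.sort_eq _ _))

theorem sortedGE_sortedHeights (cs : List RTree) : (sortedHeights cs).SortedGE :=
  (Multiset.pairwise_sort _ _).sortedLE.reverse

theorem f_node (cs : List RTree) :
    (node cs).f = max (cs.map f).sum (evenPlaceSum (sortedHeights cs)) := by
  rw [f]
  simp only [List.attach_map_val (f := f), List.attach_map_val (f := h)]
  cases cs with
  | nil => simp [sortedHeights]
  | cons c cs => rfl

theorem sum_f_le_f_node (cs : List RTree) : (cs.map f).sum ≤ (node cs).f :=
  f_node cs ▸ le_max_left _ _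

theorem sum_h_le_add_two_mul_f_node {cs : List RTree} {k : ℕ} (hk : ∀ c ∈ cs, c.h ≤ k) :
    (cs.map h).sum ≤ k + 2 * (node cs).f := by
  have hsorted : (k :: sortedHeights cs).SortedGE := by
    refine (List.pairwise_cons.2 ⟨fun x hx => ?_, (sortedGE_sortedHeights cs).pairwise⟩).sortedGE
    obtain ⟨c, hc, rfl⟩ := List.mem_map.1 ((sortedHeights_perm cs).mem_iff.1 hx)
    exact hk c hc
  calc (cs.map h).sum = (sortedHeights cs).sum := (sortedHeights_perm cs).sum_eq.symm
    _ ≤ k + 2 * evenPlaceSum (sortedHeights cs) :=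
      sum_le_add_two_nsmul_evenPlaceSum hsorted fun _ _ => Nat.zero_le _
    _ ≤ k + 2 * (node cs).f := by
      gcongr
      exact f_node cs ▸ le_max_right _ _

theorem size_le_two_mul_h_mul_f_add_h (t : RTree) : t.size ≤ 2 * t.h * t.f + t.h := by
  induction t using induction_on_children with
  | node cs ih =>
    obtain ⟨k, hk⟩ := Nat.exists_eq_add_one.2 (h_pos (node cs))
    have hcs : ∀ c ∈ cs, c.h ≤ k := fun c hc =>
      Nat.le_of_lt_succ ((h_lt_h_node hc).trans_eq hk)
    have hsize : ∀ c ∈ cs, c.size ≤ 2 * k * c.f + c.h := fun c hc =>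
      (ih c hc).trans (by gcongr; exact hcs c hc)
    calc (node cs).size = 1 + (cs.map size).sum := size_node cs
      _ ≤ 1 + (cs.map fun c => 2 * k * c.f + c.h).sum := by
        gcongr
        exact List.sum_le_sum hsize
      _ = 1 + (2 * k * (cs.map f).sum + (cs.map h).sum) := by
        rw [List.sum_map_add, List.sum_map_mul_left]
      _ ≤ 1 + (2 * k * (node cs).f + (k + 2 * (node cs).f)) := by
        gcongr
        · exact sum_f_le_f_node cs
        · exact sum_h_le_add_two_mul_f_node hcs
      _ = 2 * (node cs).h * (node cs).f + (node cs).h := by rw [hk]; ring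

end RTree

/-- For every rooted tree `T_r` on `|V|` vertices, `f(T_r) ≥ |V| / (2 h(T_r)) - 1/2`. -/
theorem f_ge_size_div_two_h (t : RTree) :
    (t.size : ℝ) / (2 * t.h) - 1 / 2 ≤ (t.f : ℝ) := by
  have hpos : (0 : ℝ) < t.h := mod_cast t.h_pos
  have hsize : (t.size : ℝ) ≤ 2 * t.h * t.f + t.h := mod_cast t.size_le_two_mul_h_mul_f_add_h
  rw [sub_le_iff_le_add, div_le_iff₀ (by positivity)]
  calc (t.size : ℝ) ≤ 2 * t.h * t.f + t.h := hsize
    _ = (t.f + 1 / 2) * (2 * t.h) := by ring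
end

section
/- Every binary tree on n vertices (a rooted tree in which every vertex has at most two children) contains a pair of disjoint homometric sets each of size at least √n − 1. -/
/-!
Root a tree of maximum degree at most three at the midpoint `c` of a longest path, and let `h` be
the largest size of a set in a homometric pair. Cutting a longest path in half gives `diam ≤ 2h`,
so all vertices lie within distance `h` of `c`.

Let `height w` be the number of vertices on a longest path descending from `w`. If `v ≠ c` has
children `a` and `b`, then `1 + height a + height b ≤ height v + min (height a) (height b)`. The
minima, summed over a single level, are at most `h`: below each `v` on the level with two children
take two descending paths of `min (height a) (height b)` vertices, one from `a` and one from `b`.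
The paths from the `a`s together and those from the `b`s together are homometric, because paths
descending from different vertices of a level are placed relative to each other by the distance of
these vertices alone. Hence level `j ≥ 1` has at most
`h + (sum of the heights on level j) - (sum of the heights on level j + 1)` vertices. Telescoping,
and bounding the heights of the at most three vertices on level `1` by `h`, gives
`n ≤ 1 + 3h + (h - 1)h = (h + 1)²`.
-/

namespace HomometricSets

variable {V : Type*} {G : SimpleGraph V}

section HomometricNumber

variable [DecidableEq V]

/-- Disjoint homometric vertex sets. The sizes are compared separately because the profile does not
distinguish the empty set from a singleton. -/
structure IsHomometricPair (G : SimpleGraph V) (A B : Finset V) : Prop where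
  disjoint : Disjoint A B
  profile_eq : G.profile A = G.profile B
  card_eq : A.card = B.card

/-- The largest size of the sets in a homometric pair of `G`, for finite `G`. -/
noncomputable def homometricNumber (G : SimpleGraph V) : ℕ :=
  sSup {k | ∃ A B, IsHomometricPair G A B ∧ A.card = k}

lemma bddAbove_card_isHomometricPair [Finite V] :
    BddAbove {k | ∃ A B, IsHomometricPair G A B ∧ A.card = k} := by
  have := Fintype.ofFinite V
  refine ⟨Fintype.card V, ?_⟩
  rintro _ ⟨A, B, -, rfl⟩
  exact A.card_le_univ

lemma exists_isHomometricPair_card_eq_homometricNumber [Finite V] (G : SimpleGraph V) :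
    ∃ A B, IsHomometricPair G A B ∧ A.card = homometricNumber G :=
  Nat.sSup_mem (s := {k | ∃ A B, IsHomometricPair G A B ∧ A.card = k})
    ⟨0, ∅, ∅, ⟨Finset.disjoint_empty_left _, rfl, rfl⟩, rfl⟩ bddAbove_card_isHomometricPair

lemma IsHomometricPair.card_le_homometricNumber [Finite V] {A B : Finset V}
    (h : IsHomometricPair G A B) : A.card ≤ homometricNumber G :=
  le_csSup bddAbove_card_isHomometricPair ⟨A, B, h, rfl⟩

lemma profile_image {ι : Type*} {I : Finset ι} {f : ι → V} (hf : Set.InjOn f I) :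
    G.profile (I.image f) =
      I.offDiag.val.map fun p => G.dist (f p.1) (f p.2) := by
  classical
  have hoffDiag : (I.image f).offDiag = I.offDiag.image (Prod.map f f) := by
    ext ⟨x, y⟩
    simp only [Finset.mem_offDiag, Finset.mem_image, Prod.exists, Prod.map_apply, Prod.mk.injEq]
    constructor
    · rintro ⟨⟨i, hi, rfl⟩, ⟨j, hj, rfl⟩, hij⟩
      exact ⟨i, j, ⟨hi, hj, ne_of_apply_ne f hij⟩, rfl, rfl⟩
    · rintro ⟨i, j, ⟨hi, hj, hij⟩, rfl, rfl⟩
      exact ⟨⟨i, hi, rfl⟩, ⟨j, hj, rfl⟩, hf.ne hi hj hij⟩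
  have hinj : Set.InjOn (Prod.map f f) I.offDiag :=
    (hf.prodMap hf).mono (by simpa only [Finset.coe_offDiag] using Set.offDiag_subset_prod _)
  rw [SimpleGraph.profile, hoffDiag, Finset.image_val_of_injOn hinj, Multiset.map_map]
  rfl

lemma card_le_homometricNumber_of_dist_eq [Finite V] (hG : G.Connected) {ι : Type*} (I : Finset ι)
    (f g : ι → V) (hf : Set.InjOn f I)
    (hdist : ∀ i ∈ I, ∀ j ∈ I, G.dist (f i) (f j) = G.dist (g i) (g j))
    (hne : ∀ i ∈ I, ∀ j ∈ I, f i ≠ g j) : I.card ≤ homometricNumber G := by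
  have hg : Set.InjOn g I := fun i hi j hj hij => hf hi hj <| by
    rw [← hG.dist_eq_zero_iff, hdist i hi j hj, hij, SimpleGraph.dist_self]
  have hpair : IsHomometricPair G (I.image f) (I.image g) := by
    refine ⟨?_, ?_, ?_⟩
    · rw [Finset.disjoint_iff_ne]
      simpa only [Finset.forall_mem_image] using hne
    · rw [profile_image hf, profile_image hg]
      refine Multiset.map_congr rfl fun p hp => ?_
      rw [Finset.mem_val, Finset.mem_offDiag] at hp
      exact hdist _ hp.1 _ hp.2.1
    · rw [Finset.card_image_of_injOn hf, Finset.card_image_of_injOn hg]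
  simpa only [Finset.card_image_of_injOn hf] using hpair.card_le_homometricNumber

end HomometricNumber

section Geodesic

/-- `p 0, …, p (n - 1)` are the successive vertices of a shortest path of `G`. The sequence `p` is
total, and its values from `n` on are irrelevant. -/
def IsGeodesic (G : SimpleGraph V) (p : ℕ → V) (n : ℕ) : Prop :=
  ∀ i < n, ∀ j < n, G.dist (p i) (p j) = Nat.dist i j

lemma dist_getVert_of_length_eq_dist {u v : V} {p : G.Walk u v} (hp : p.length = G.dist u v)
    {i j : ℕ} (hij : i ≤ j) (hj : j ≤ p.length) : G.dist (p.getVert i) (p.getVert j) = j - i := by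
  have h := SimpleGraph.length_eq_dist_of_subwalk hp
    (((p.drop i).isSubwalk_take (j - i)).trans (p.isSubwalk_drop i))
  rw [SimpleGraph.Walk.take_length, SimpleGraph.Walk.drop_length,
    SimpleGraph.Walk.drop_getVert, Nat.add_sub_cancel' hij] at h
  omega

lemma exists_isGeodesic (hG : G.Connected) (u v : V) :
    ∃ p : ℕ → V, IsGeodesic G p (G.dist u v + 1) ∧ p 0 = u ∧ p (G.dist u v) = v := by
  obtain ⟨w, hw⟩ := hG.exists_walk_length_eq_dist u v
  refine ⟨w.getVert, fun i hi j hj => ?_, w.getVert_zero, by rw [← hw, w.getVert_length]⟩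
  rcases le_total i j with hij | hji
  · rw [dist_getVert_of_length_eq_dist hw hij (by omega), Nat.dist_eq_sub_of_le hij]
  · rw [SimpleGraph.dist_comm, dist_getVert_of_length_eq_dist hw hji (by omega),
      Nat.dist_eq_sub_of_le_right hji]

lemma exists_dist_eq_dist_eq_sub (hG : G.Connected) {u v : V} {i : ℕ} (hi : i ≤ G.dist u v) :
    ∃ w, G.dist u w = i ∧ G.dist w v = G.dist u v - i := by
  obtain ⟨p, hp, hp_zero, hp_last⟩ := exists_isGeodesic hG u v
  refine ⟨p i, ?_, ?_⟩
  · rw [← hp_zero, hp 0 (by omega) i (by omega), Nat.dist_zero_left]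
  · rw [← Nat.dist_eq_sub_of_le hi, ← hp i (by omega) _ (Nat.lt_succ_self _), hp_last]

lemma diam_le_two_mul_homometricNumber [Finite V] [DecidableEq V] (hG : G.Connected) :
    G.diam ≤ 2 * homometricNumber G := by
  have := hG.nonempty
  obtain ⟨x, y, hxy⟩ := G.exists_dist_eq_diam
  obtain ⟨p, hp, -, -⟩ := exists_isGeodesic hG x y
  obtain ⟨m, hm⟩ : ∃ m, m = (G.diam + 1) / 2 := ⟨_, rfl⟩
  have hm_le : m ≤ homometricNumber G := by
    rw [← Finset.card_range m]
    refine card_le_homometricNumber_of_dist_eq hG (Finset.range m) p (fun i => p (m + i))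
      (fun i hi j hj hij => ?_) (fun i hi j hj => ?_) (fun i hi j hj hij => ?_)
    all_goals simp only [Finset.coe_range, Set.mem_Iio, Finset.mem_range] at hi hj
    · rw [← hG.dist_eq_zero_iff, hp i (by omega) j (by omega)] at hij
      exact Nat.eq_of_dist_eq_zero hij
    · rw [hp i (by omega) j (by omega), hp _ (by omega) _ (by omega), Nat.dist_add_add_left]
    · rw [← hG.dist_eq_zero_iff, hp i (by omega) _ (by omega)] at hij
      have := Nat.eq_of_dist_eq_zero hij
      omega
  omega

end Geodesic

section TreeMetric

variable {c u v w x y z : V}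

lemma exists_isParentOf (hG : G.Connected) (hv : v ≠ c) : ∃ u, G.IsParentOf c u v := by
  have hpos := hG.pos_dist_of_ne hv.symm
  obtain ⟨u, hcu, huv⟩ := exists_dist_eq_dist_eq_sub hG (Nat.sub_le (G.dist c v) 1)
  exact ⟨u, SimpleGraph.dist_eq_one_iff_adj.1 (by omega), by omega⟩

lemma isParentOf_unique (hG : G.IsTree) (hu : G.IsParentOf c u v) (hw : G.IsParentOf c w v) :
    u = w := by
  obtain ⟨p, hp⟩ := hG.connected.exists_walk_length_eq_dist c u
  obtain ⟨q, hq⟩ := hG.connected.exists_walk_length_eq_dist c w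
  have hp_path : (p.concat hu.1).IsPath := SimpleGraph.Walk.isPath_of_length_eq_dist _ <| by
    rw [SimpleGraph.Walk.length_concat, hp, hu.2]
  have hq_path : (q.concat hw.1).IsPath := SimpleGraph.Walk.isPath_of_length_eq_dist _ <| by
    rw [SimpleGraph.Walk.length_concat, hq, hw.2]
  have hpq := (hG.existsUnique_path c v).unique hp_path hq_path
  simpa only [SimpleGraph.Walk.penultimate_concat] using
    congrArg SimpleGraph.Walk.penultimate hpq

/-- The edge `v w` separates `x` from `y`. -/
lemma dist_eq_add_of_isParentOf (hG : G.IsTree) (hx : G.IsParentOf x v w)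
    (hy : G.IsParentOf y w v) : G.dist x y = G.dist x w + G.dist w y := by
  induction hn : G.dist w y generalizing v w with
  | zero =>
    rw [hG.connected.dist_eq_zero_iff] at hn
    rw [hn, Nat.add_zero]
  | succ n ih =>
    obtain ⟨w', hw'⟩ := exists_isParentOf hG.connected (c := y) (v := w) <| by
      rintro rfl
      rw [SimpleGraph.dist_self] at hn
      omega
    have hn' : G.dist w' y = n := by
      have := hw'.2
      rw [G.dist_comm (u := y) (v := w), hn, G.dist_comm] at this
      omega
    rcases hG.dist_eq_dist_add_one_of_adj x hw'.1 with h | h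
    · rw [ih ⟨hw'.1.symm, h.symm⟩ hw' hn', h]
      omega
    · have hvw' : v = w' := isParentOf_unique hG hx ⟨hw'.1, h.symm⟩
      have := hy.2
      have := hw'.2
      subst hvw'
      omega

lemma dist_add_dist_le_max (hG : G.IsTree) (x y z w : V) :
    G.dist x y + G.dist z w ≤
      max (G.dist x z + G.dist y w) (G.dist x w + G.dist y z) := by
  induction hn : G.dist y x generalizing x with
  | zero =>
    obtain rfl := hG.connected.dist_eq_zero_iff.1 hn
    rw [SimpleGraph.dist_self, Nat.zero_add, Nat.add_comm (G.dist y w), max_self,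
      G.dist_comm (u := y) (v := z)]
    exact hG.connected.dist_triangle
  | succ n ih =>
    obtain ⟨x', hx'⟩ := exists_isParentOf hG.connected (c := y) (v := x) <| by
      rintro rfl
      rw [SimpleGraph.dist_self] at hn
      omega
    have hstep : ∀ u, G.dist x u = G.dist x' u + 1 ∨ G.dist y u = G.dist y x + G.dist x u := by
      intro u
      rcases hG.dist_eq_dist_add_one_of_adj u hx'.1.symm with h | h
      · left
        rwa [G.dist_comm (u := x), G.dist_comm (u := x')]
      · right
        have := dist_eq_add_of_isParentOf hG ⟨hx'.1.symm, h.symm⟩ hx'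
        have := hx'.2
        grind [SimpleGraph.dist_comm]
    have hx'_dist := hx'.2
    have hfour := ih x' (by omega)
    have htri := hG.connected.dist_triangle (u := z) (v := x) (w := w)
    have hz := hstep z
    have hw := hstep w
    rw [G.dist_comm (u := z) (v := x)] at htri
    rw [G.dist_comm (u := x') (v := y)] at hfour
    rw [G.dist_comm (u := x) (v := y)]
    omega

variable (G) in
/-- Once the tree `G` is rooted at `c`, the vertex `x` lies in the subtree of `v`. -/
def IsDescendant (c v x : V) : Prop :=
  G.dist c x = G.dist c v + G.dist v x

lemma IsDescendant.refl (c v : V) : IsDescendant G c v v := by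
  rw [IsDescendant, SimpleGraph.dist_self, Nat.add_zero]

lemma isDescendant_of_isParentOf (h : G.IsParentOf c v w) : IsDescendant G c v w := by
  rw [IsDescendant, SimpleGraph.dist_eq_one_iff_adj.2 h.1, h.2]

lemma IsDescendant.dist_eq_add (hG : G.Connected) (hv : IsDescendant G c u v)
    (hx : IsDescendant G c v x) : G.dist u x = G.dist u v + G.dist v x := by
  have := hG.dist_triangle (u := c) (v := u) (w := x)
  have := hG.dist_triangle (u := u) (v := v) (w := x)
  unfold IsDescendant at hv hx
  omega

lemma IsDescendant.trans (hG : G.Connected) (hv : IsDescendant G c u v)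
    (hx : IsDescendant G c v x) : IsDescendant G c u x := by
  rw [IsDescendant, hv.dist_eq_add hG hx, hx, hv, Nat.add_assoc]

lemma IsDescendant.dist_eq_add_of_dist_eq (hG : G.IsTree) (hx : IsDescendant G c u x)
    (hlevel : G.dist c u = G.dist c v) (huv : u ≠ v) :
    G.dist v x = G.dist u v + G.dist u x := by
  have hpos := hG.connected.pos_dist_of_ne huv
  have hfour := dist_add_dist_le_max hG c x u v
  have htri := hG.connected.dist_triangle (u := v) (v := u) (w := x)
  rw [G.dist_comm (u := x) (v := v), G.dist_comm (u := x) (v := u)] at hfour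
  rw [G.dist_comm (u := v) (v := u)] at htri
  unfold IsDescendant at hx
  omega

lemma IsDescendant.dist_eq_add_add (hG : G.IsTree) (hx : IsDescendant G c u x)
    (hy : IsDescendant G c v y) (hlevel : G.dist c u = G.dist c v) (huv : u ≠ v) :
    G.dist x y = G.dist u x + G.dist u v + G.dist v y := by
  have hpos := hG.connected.pos_dist_of_ne huv
  have hvx := hx.dist_eq_add_of_dist_eq hG hlevel huv
  have huy := hy.dist_eq_add_of_dist_eq hG hlevel.symm huv.symm
  have hfour := dist_add_dist_le_max hG v x u y
  have htri := hG.connected.dist_triangle (u := x) (v := u) (w := y)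
  rw [G.dist_comm (u := x) (v := u)] at hfour htri
  rw [G.dist_comm (u := v) (v := u)] at hfour huy
  omega

lemma exists_forall_two_mul_dist_le_diam_add_one [Finite V] (hG : G.IsTree) :
    ∃ c, ∀ z, 2 * G.dist c z ≤ G.diam + 1 := by
  have := hG.connected.nonempty
  have hdiam : ∀ x y, G.dist x y ≤ G.diam := fun x y =>
    SimpleGraph.dist_le_diam (SimpleGraph.connected_iff_ediam_ne_top.1 hG.connected)
  obtain ⟨x, y, hxy⟩ := G.exists_dist_eq_diam
  obtain ⟨c, hxc, hcy⟩ :=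
    exists_dist_eq_dist_eq_sub hG.connected (Nat.div_le_self (G.dist x y) 2)
  refine ⟨c, fun z => ?_⟩
  have hfour := dist_add_dist_le_max hG x y c z
  have hxz := hdiam x z
  have hyz := hdiam y z
  rw [G.dist_comm (u := y) (v := c)] at hfour
  omega

end TreeMetric

section Children

variable [Fintype V] {c v w : V}

variable (G) in
open Classical in
/-- The children of `v` once the tree `G` is rooted at `c`. -/
noncomputable def children (c v : V) : Finset V :=
  {w | G.IsParentOf c v w}

lemma mem_children : w ∈ children G c v ↔ G.IsParentOf c v w := by
  simp only [children, Finset.mem_filter_univ]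

lemma coe_children (G : SimpleGraph V) (c v : V) :
    (children G c v : Set V) = {w | G.IsParentOf c v w} := by
  ext w
  rw [Finset.mem_coe, mem_children, Set.mem_ofPred_eq]

lemma ncard_neighborSet_root (G : SimpleGraph V) (c : V) :
    (G.neighborSet c).ncard = (children G c c).card := by
  rw [← Set.ncard_coe_finset]
  congr 1
  ext w
  rw [Finset.mem_coe, mem_children, SimpleGraph.mem_neighborSet, SimpleGraph.IsParentOf,
    SimpleGraph.dist_self, Nat.zero_add, eq_comm, SimpleGraph.dist_eq_one_iff_adj, and_self]

lemma ncard_neighborSet_of_ne (hG : G.IsTree) (hv : v ≠ c) :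
    (G.neighborSet v).ncard = (children G c v).card + 1 := by
  classical
  obtain ⟨u, hu⟩ := exists_isParentOf hG.connected hv
  have hnotMem : u ∉ children G c v := fun h => by
    have := hu.2
    have := (mem_children.1 h).2
    omega
  rw [← Finset.card_insert_of_notMem hnotMem, ← Set.ncard_coe_finset]
  congr 1
  ext w
  simp only [Finset.coe_insert, Set.mem_insert_iff, Finset.mem_coe, mem_children,
    SimpleGraph.mem_neighborSet]
  constructor
  · intro hvw
    rcases hG.dist_eq_dist_add_one_of_adj c hvw with h | h
    · exact Or.inl (isParentOf_unique hG ⟨hvw.symm, h.symm⟩ hu)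
    · exact Or.inr ⟨hvw, h.symm⟩
  · rintro (rfl | h)
    · exact hu.1.symm
    · exact h.1

end Children

lemma ncard_neighborSet_le_add_one [Finite V] (hG : G.IsTree) {c : V} {k : ℕ}
    (hk : ∀ v, {w | G.IsParentOf c v w}.ncard ≤ k) (v : V) :
    (G.neighborSet v).ncard ≤ k + 1 := by
  have := Fintype.ofFinite V
  have hv := hk v
  rw [← coe_children, Set.ncard_coe_finset] at hv
  rcases eq_or_ne v c with rfl | hvc
  · rw [ncard_neighborSet_root]
    omega
  · rw [ncard_neighborSet_of_ne hG hvc]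
    omega

section Height

variable [Fintype V] {c v w x : V}

variable (G) in
open Classical in
/-- The number of vertices on a longest path descending from `v`, once the tree `G` is rooted
at `c`. -/
noncomputable def height (c v : V) : ℕ :=
  Finset.sup {x | IsDescendant G c v x} (G.dist v) + 1

lemma IsDescendant.dist_lt_height (h : IsDescendant G c v x) : G.dist v x < height G c v := by
  classical
  exact Nat.lt_succ_of_le (Finset.le_sup (f := G.dist v) (by simpa using h))

lemma exists_isDescendant_height_eq (G : SimpleGraph V) (c v : V) :
    ∃ x, IsDescendant G c v x ∧ height G c v = G.dist v x + 1 := by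
  classical
  obtain ⟨x, hx, hsup⟩ := Finset.exists_mem_eq_sup ({x | IsDescendant G c v x} : Finset V)
    ⟨v, by simpa using IsDescendant.refl c v⟩ (G.dist v)
  refine ⟨x, by simpa using hx, ?_⟩
  rw [← hsup, height]

lemma height_pos (G : SimpleGraph V) (c v : V) : 0 < height G c v :=
  Nat.succ_pos _

lemma height_lt_height_of_isParentOf (hG : G.Connected) (h : G.IsParentOf c v w) :
    height G c w < height G c v := by
  obtain ⟨x, hx, hheight⟩ := exists_isDescendant_height_eq G c w
  have hw := isDescendant_of_isParentOf h
  have hlt := (hw.trans hG hx).dist_lt_height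
  rw [hw.dist_eq_add hG hx, SimpleGraph.dist_eq_one_iff_adj.2 h.1] at hlt
  omega

lemma height_le_of_forall_dist_le (hG : G.Connected) {D : ℕ} (hD : ∀ z, G.dist c z ≤ D)
    (hv : v ≠ c) : height G c v ≤ D := by
  obtain ⟨x, hx, hheight⟩ := exists_isDescendant_height_eq G c v
  have := hD x
  have := hG.pos_dist_of_ne hv.symm
  unfold IsDescendant at hx
  omega

lemma exists_isGeodesic_height (hG : G.Connected) (c v : V) :
    ∃ p : ℕ → V, IsGeodesic G p (height G c v) ∧
      ∀ i < height G c v, IsDescendant G c v (p i) ∧ G.dist v (p i) = i := by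
  obtain ⟨x, hx, hheight⟩ := exists_isDescendant_height_eq G c v
  obtain ⟨p, hp, hp_zero, hp_last⟩ := exists_isGeodesic hG v x
  rw [hheight]
  refine ⟨p, hp, fun i hi => ?_⟩
  have hv : G.dist v (p i) = i := by
    rw [← hp_zero, hp 0 (by omega) i hi, Nat.dist_zero_left]
  have hix : G.dist (p i) x = G.dist v x - i := by
    rw [← Nat.dist_eq_sub_of_le (Nat.lt_succ_iff.1 hi), ← hp i hi _ (Nat.lt_succ_self _), hp_last]
  have hci := hG.dist_triangle (u := c) (v := v) (w := p i)
  have hcx := hG.dist_triangle (u := c) (v := p i) (w := x)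
  refine ⟨?_, hv⟩
  unfold IsDescendant at hx ⊢
  omega

/-- The geodesic `p v` runs from `v` down to the bottom of its subtree. -/
lemma exists_hanging_geodesics [DecidableEq V] (hG : G.IsTree) (c : V) :
    ∃ p : V → ℕ → V, ∀ v w i j, G.dist c v = G.dist c w → i < height G c v → j < height G c w →
      G.dist (p v i) (p w j) = (if v = w then Nat.dist i j else i + G.dist v w + j) ∧
      (p v i = p w j → v = w ∧ i = j) := by
  choose p hp_geod hp using exists_isGeodesic_height hG.connected c
  refine ⟨p, fun v w i j hvw hi hj => ?_⟩
  rw [← hG.connected.dist_eq_zero_iff (u := p v i)]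
  split_ifs with h
  · subst h
    refine ⟨hp_geod v i hi j hj, fun hzero => ⟨rfl, Nat.eq_of_dist_eq_zero ?_⟩⟩
    rw [← hp_geod v i hi j hj, hzero]
  · have hdist := (hp v i hi).1.dist_eq_add_add hG (hp w j hj).1 hvw h
    rw [(hp v i hi).2, (hp w j hj).2] at hdist
    refine ⟨hdist, fun hzero => ?_⟩
    have := hG.connected.pos_dist_of_ne h
    omega

lemma sum_le_homometricNumber_of_level [DecidableEq V] (hG : G.IsTree) {ι : Type*} (I : Finset ι)
    {a b : ι → V} {t : ι → ℕ} {k : ℕ} (ha : ∀ s ∈ I, G.dist c (a s) = k)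
    (hb : ∀ s ∈ I, G.dist c (b s) = k) (ha_inj : Set.InjOn a I)
    (hdist : ∀ s ∈ I, ∀ s' ∈ I, G.dist (a s) (a s') = G.dist (b s) (b s'))
    (hne : ∀ s ∈ I, ∀ s' ∈ I, a s ≠ b s') (hta : ∀ s ∈ I, t s ≤ height G c (a s))
    (htb : ∀ s ∈ I, t s ≤ height G c (b s)) :
    ∑ s ∈ I, t s ≤ homometricNumber G := by
  obtain ⟨p, hp⟩ := exists_hanging_geodesics hG c
  have hpair : ∀ {f g : ι → V}, (∀ s ∈ I, G.dist c (f s) = k) → (∀ s ∈ I, G.dist c (g s) = k) →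
      (∀ s ∈ I, t s ≤ height G c (f s)) → (∀ s ∈ I, t s ≤ height G c (g s)) →
      ∀ s i s' i', s ∈ I ∧ i < t s → s' ∈ I ∧ i' < t s' →
      G.dist (p (f s) i) (p (g s') i') =
        (if f s = g s' then Nat.dist i i' else i + G.dist (f s) (g s') + i') ∧
      (p (f s) i = p (g s') i' → f s = g s' ∧ i = i') :=
    fun hf hg htf htg s i s' i' hs hs' => hp _ _ i i' ((hf s hs.1).trans (hg s' hs'.1).symm)
      (hs.2.trans_le (htf s hs.1)) (hs'.2.trans_le (htg s' hs'.1))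
  rw [← Finset.sum_congr rfl fun s _ => Finset.card_range (t s), ← Finset.card_sigma]
  refine card_le_homometricNumber_of_dist_eq hG.connected _ (fun x => p (a x.1) x.2)
    (fun x => p (b x.1) x.2) ?_ ?_ ?_
  all_goals
    rintro ⟨s, i⟩ hx ⟨s', i'⟩ hy
    simp only [Finset.mem_coe, Finset.mem_sigma, Finset.mem_range] at hx hy
  · intro h
    obtain ⟨haa', rfl⟩ := (hpair ha ha hta hta s i s' i' hx hy).2 h
    obtain rfl := ha_inj hx.1 hy.1 haa'
    rfl
  · rw [(hpair ha ha hta hta s i s' i' hx hy).1, (hpair hb hb htb htb s i s' i' hx hy).1]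
    simp only [← hG.connected.dist_eq_zero_iff, hdist s hx.1 s' hy.1]
  · exact fun h => hne s hx.1 s' hy.1 ((hpair ha hb hta htb s i s' i' hx hy).2 h).1

end Height

section Level

variable [Fintype V] {c v : V} {j : ℕ}

variable (G) in
/-- The vertices at distance `j` from `c`. -/
noncomputable def level (c : V) (j : ℕ) : Finset V :=
  {v | G.dist c v = j}

lemma mem_level : v ∈ level G c j ↔ G.dist c v = j := by
  simp only [level, Finset.mem_filter_univ]

lemma sum_level_succ (hG : G.IsTree) (c : V) (j : ℕ) (f : V → ℕ) :
    ∑ w ∈ level G c (j + 1), f w = ∑ v ∈ level G c j, ∑ w ∈ children G c v, f w := by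
  classical
  have hlevel : level G c (j + 1) = (level G c j).biUnion (children G c) := by
    ext w
    simp only [mem_level, Finset.mem_biUnion, mem_children]
    constructor
    · intro hw
      obtain ⟨v, hv⟩ := exists_isParentOf hG.connected (c := c) (v := w) <| by
        rintro rfl
        rw [SimpleGraph.dist_self] at hw
        omega
      exact ⟨v, by have := hv.2; omega, hv⟩
    · rintro ⟨v, hv, hw⟩
      rw [← hw.2, hv]
  rw [hlevel, Finset.sum_biUnion]
  intro v _ v' _ hvv'
  rw [Function.onFun, Finset.disjoint_left]
  exact fun w hw hw' => hvv' (isParentOf_unique hG (mem_children.1 hw) (mem_children.1 hw'))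

lemma exists_children_le_height (hG : G.Connected) (hv : (children G c v).card ≤ 2) {t : ℕ}
    (ht : t ≠ 0) (hheight : height G c v + t ≤ 1 + ∑ w ∈ children G c v, height G c w) :
    ∃ a ∈ children G c v, ∃ b ∈ children G c v,
      a ≠ b ∧ t ≤ height G c a ∧ t ≤ height G c b := by
  classical
  have hlt : ∀ w ∈ children G c v, height G c w < height G c v := fun w hw =>
    height_lt_height_of_isParentOf hG (mem_children.1 hw)
  have hpos := height_pos G c v
  interval_cases hcard : (children G c v).card
  · rw [Finset.card_eq_zero.1 hcard, Finset.sum_empty] at hheight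
    omega
  · obtain ⟨a, ha⟩ := Finset.card_eq_one.1 hcard
    rw [ha, Finset.sum_singleton] at hheight
    have := hlt a (ha ▸ Finset.mem_singleton_self a)
    omega
  · obtain ⟨a, b, hab, hchildren⟩ := Finset.card_eq_two.1 hcard
    rw [hchildren, Finset.sum_pair hab] at hheight
    rw [hchildren] at hlt ⊢
    have hla := hlt a (Finset.mem_insert_self _ _)
    have hlb := hlt b (Finset.mem_insert_of_mem (Finset.mem_singleton_self _))
    exact ⟨a, Finset.mem_insert_self _ _, b, Finset.mem_insert_of_mem (Finset.mem_singleton_self _),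
      hab, by omega, by omega⟩

lemma dist_children_eq (hG : G.IsTree) {v' w w' : V} (hvv' : G.dist c v = G.dist c v')
    (hne : v ≠ v') (hw : w ∈ children G c v) (hw' : w' ∈ children G c v') :
    G.dist w w' = 1 + G.dist v v' + 1 := by
  rw [mem_children] at hw hw'
  rw [(isDescendant_of_isParentOf hw).dist_eq_add_add hG (isDescendant_of_isParentOf hw') hvv' hne,
    SimpleGraph.dist_eq_one_iff_adj.2 hw.1, SimpleGraph.dist_eq_one_iff_adj.2 hw'.1]

lemma sum_le_homometricNumber_of_children [DecidableEq V] (hG : G.IsTree) {S : Finset V}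
    (hS : ∀ v ∈ S, G.dist c v = j) {t : V → ℕ}
    (ht : ∀ v ∈ S, ∃ a ∈ children G c v, ∃ b ∈ children G c v,
      a ≠ b ∧ t v ≤ height G c a ∧ t v ≤ height G c b) :
    ∑ v ∈ S, t v ≤ homometricNumber G := by
  choose! a ha b hb hab hta htb using ht
  have hdist : ∀ v ∈ S, ∀ v' ∈ S, v ≠ v' → ∀ {w w'}, w ∈ children G c v →
      w' ∈ children G c v' → G.dist w w' = 1 + G.dist v v' + 1 := fun v hv v' hv' hne _ _ hw hw' =>
    dist_children_eq hG ((hS v hv).trans (hS v' hv').symm) hne hw hw'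
  have hlevel : ∀ v ∈ S, ∀ {w}, w ∈ children G c v → G.dist c w = j + 1 := fun v hv _ hw => by
    rw [← (mem_children.1 hw).2, hS v hv]
  refine sum_le_homometricNumber_of_level hG S (fun v hv => hlevel v hv (ha v hv))
    (fun v hv => hlevel v hv (hb v hv)) ?_ ?_ ?_ hta htb
  · intro v hv v' hv' haa'
    refine isParentOf_unique hG (mem_children.1 (ha v hv)) ?_
    rw [haa']
    exact mem_children.1 (ha v' hv')
  · intro v hv v' hv'
    rcases eq_or_ne v v' with rfl | hne
    · rw [SimpleGraph.dist_self, SimpleGraph.dist_self]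
    · rw [hdist v hv v' hv' hne (ha v hv) (ha v' hv'), hdist v hv v' hv' hne (hb v hv) (hb v' hv')]
  · intro v hv v' hv' h
    refine hab v hv (h.trans ?_)
    have hvv' : v = v' := isParentOf_unique hG (mem_children.1 (ha v hv)) <| by
      rw [h]
      exact mem_children.1 (hb v' hv')
    rw [hvv']

lemma card_level_add_sum_height_le [DecidableEq V] (hG : G.IsTree)
    (hchild : ∀ v ∈ level G c j, (children G c v).card ≤ 2) :
    (level G c j).card + ∑ w ∈ level G c (j + 1), height G c w ≤
      ∑ v ∈ level G c j, height G c v + homometricNumber G := by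
  obtain ⟨t, ht⟩ : ∃ t : V → ℕ,
      ∀ v, t v = 1 + ∑ w ∈ children G c v, height G c w - height G c v := ⟨_, fun _ => rfl⟩
  have hsum : ∑ v ∈ level G c j, t v ≤ homometricNumber G := by
    rw [← Finset.sum_filter_ne_zero]
    refine sum_le_homometricNumber_of_children hG (c := c) (j := j) (fun v hv => ?_) fun v hv => ?_
    all_goals rw [Finset.mem_filter] at hv
    · exact mem_level.1 hv.1
    · have := ht v
      exact exists_children_le_height hG.connected (hchild v hv.1) hv.2 (by omega)
  calc (level G c j).card + ∑ w ∈ level G c (j + 1), height G c w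
      = ∑ v ∈ level G c j, (1 + ∑ w ∈ children G c v, height G c w) := by
        rw [sum_level_succ hG, Finset.sum_add_distrib, Finset.card_eq_sum_ones]
    _ ≤ ∑ v ∈ level G c j, (height G c v + t v) :=
        Finset.sum_le_sum fun v _ => by have := ht v; omega
    _ = ∑ v ∈ level G c j, height G c v + ∑ v ∈ level G c j, t v := Finset.sum_add_distrib
    _ ≤ _ := Nat.add_le_add_left hsum _

lemma sum_card_level_add_sum_height_le [DecidableEq V] (hG : G.IsTree)
    (hchild : ∀ v ≠ c, (children G c v).card ≤ 2) (k : ℕ) :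
    ∑ j ∈ Finset.range k, (level G c (j + 1)).card + ∑ w ∈ level G c (k + 1), height G c w ≤
      ∑ v ∈ level G c 1, height G c v + k * homometricNumber G := by
  induction k with
  | zero => simp only [Finset.sum_range_zero, Nat.zero_add, Nat.zero_mul, Nat.add_zero, le_refl]
  | succ k ih =>
    have hstep := card_level_add_sum_height_le hG (c := c) (j := k + 1) fun v hv => hchild v <| by
      rintro rfl
      rw [mem_level, SimpleGraph.dist_self] at hv
      omega
    rw [Finset.sum_range_succ, Nat.succ_mul]
    omega

lemma level_zero (hG : G.Connected) (c : V) : level G c 0 = {c} := by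
  ext v
  rw [mem_level, hG.dist_eq_zero_iff, Finset.mem_singleton, eq_comm]

lemma card_eq_one_add_sum_card_level (hG : G.Connected) {D : ℕ} (hD : ∀ z, G.dist c z ≤ D) :
    Fintype.card V = 1 + ∑ j ∈ Finset.range D, (level G c (j + 1)).card := by
  have hmaps : Set.MapsTo (G.dist c) (Finset.univ : Finset V) (Finset.range (D + 1)) := fun z _ =>
    Finset.mem_coe.2 (Finset.mem_range.2 (Nat.lt_succ_of_le (hD z)))
  calc Fintype.card V = ∑ j ∈ Finset.range (D + 1), (level G c j).card :=
        Finset.card_eq_sum_card_fiberwise hmaps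
    _ = _ := by rw [Finset.sum_range_succ', level_zero hG, Finset.card_singleton, Nat.add_comm]

lemma card_le_sq_homometricNumber_add_one [DecidableEq V] (hG : G.IsTree)
    (hdeg : ∀ v, (G.neighborSet v).ncard ≤ 3) :
    Fintype.card V ≤ (homometricNumber G + 1) ^ 2 := by
  obtain ⟨c, hc⟩ := exists_forall_two_mul_dist_le_diam_add_one hG
  have hD : ∀ z, G.dist c z ≤ homometricNumber G := fun z => by
    have := hc z
    have := diam_le_two_mul_homometricNumber hG.connected
    omega
  have hchild : ∀ v ≠ c, (children G c v).card ≤ 2 := fun v hv => by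
    have := hdeg v
    rw [ncard_neighborSet_of_ne hG hv] at this
    omega
  have hlevel_one : ∑ v ∈ level G c 1, height G c v ≤ 3 * homometricNumber G := by
    rw [sum_level_succ hG, level_zero hG.connected, Finset.sum_singleton]
    have hroot := hdeg c
    rw [ncard_neighborSet_root] at hroot
    refine (Finset.sum_le_card_nsmul _ _ (homometricNumber G) fun v hv => ?_).trans
      (Nat.mul_le_mul_right _ hroot)
    exact height_le_of_forall_dist_le hG.connected hD (mem_children.1 hv).1.ne'
  rw [card_eq_one_add_sum_card_level hG.connected hD]
  cases hh : homometricNumber G with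
  | zero => simp only [Finset.sum_range_zero, Nat.add_zero, Nat.zero_add, one_pow, le_refl]
  | succ h =>
    have htelescope := sum_card_level_add_sum_height_le hG hchild h
    have hlast : (level G c (h + 1)).card ≤ ∑ w ∈ level G c (h + 1), height G c w := by
      rw [Finset.card_eq_sum_ones]
      exact Finset.sum_le_sum fun w _ => height_pos G c w
    rw [hh] at hlevel_one htelescope
    calc 1 + ∑ j ∈ Finset.range (h + 1), (level G c (j + 1)).card
        ≤ 1 + (3 * (h + 1) + h * (h + 1)) := by
          rw [Finset.sum_range_succ]
          omega
      _ = (h + 1 + 1) ^ 2 := by ring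

end Level

end HomometricSets

/-- Every binary tree on `n` vertices (a tree rooted at a vertex `r` in which every
vertex has at most two children) contains a pair of disjoint homometric sets, each of
size at least `√n - 1`. -/
theorem binary_tree_homometric_sets {V : Type*} [Fintype V] [DecidableEq V]
    (G : SimpleGraph V) (hG : G.IsTree) (r : V)
    (hbin : ∀ v : V, {w : V | G.IsParentOf r v w}.ncard ≤ 2) :
    ∃ A B : Finset V, Disjoint A B ∧ G.profile A = G.profile B ∧ A.card = B.card ∧
      Real.sqrt (Fintype.card V) - 1 ≤ (A.card : ℝ) := by
  have hdeg : ∀ v, (G.neighborSet v).ncard ≤ 3 :=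
    HomometricSets.ncard_neighborSet_le_add_one hG hbin
  obtain ⟨A, B, hAB, hcard⟩ :=
    HomometricSets.exists_isHomometricPair_card_eq_homometricNumber G
  refine ⟨A, B, hAB.disjoint, hAB.profile_eq, hAB.card_eq, ?_⟩
  rw [hcard, sub_le_iff_le_add]
  refine Real.sqrt_le_iff.2 ⟨by positivity, ?_⟩
  exact_mod_cast HomometricSets.card_le_sq_homometricNumber_add_one hG hdeg
end

section
/- Every haircomb tree with spine on s vertices and longest leg on l vertices contains a pair of disjoint homometric sets each of size at least ⌊s/2⌋, and also a pair of disjoint homometric sets each of size at least ⌊l/2⌋. -/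
/-- The canonical haircomb graph with `m` legs, the `i`-th leg being a path on
`L i + 1` vertices `(i,0), (i,1), …, (i, L i)`.  The vertices `(i, 0)` form the spine:
consecutive spine vertices are adjacent. -/
def haircombGraph (m : ℕ) (L : Fin m → ℕ) : SimpleGraph (Σ i : Fin m, Fin (L i + 1)) :=
  SimpleGraph.fromRel fun a b =>
    (a.1 = b.1 ∧ (a.2 : ℕ) + 1 = (b.2 : ℕ)) ∨
    ((a.1 : ℕ) + 1 = (b.1 : ℕ) ∧ (a.2 : ℕ) = 0 ∧ (b.2 : ℕ) = 0)

/-!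
Reversing a path is an automorphism that exchanges its two halves, so a path on `n` vertices has
homometric sets of size `⌊n/2⌋`. The spine and every leg of a haircomb are images of retractions
that send each edge to an edge or a vertex. Such maps do not increase distances, so the spine and
the legs are isometrically embedded paths and inherit these homometric sets.
-/

section Isometry

variable {V W : Type*} {G : SimpleGraph V} {H : SimpleGraph W}

/-- A weak graph homomorphism: each edge is sent to an edge or collapsed to a vertex. Unlike the
homomorphisms `G →g H`, these include the retractions of a tree onto its paths. -/
def IsWeakHom (G : SimpleGraph V) (H : SimpleGraph W) (f : V → W) : Prop :=
  ∀ ⦃u v⦄, G.Adj u v → H.Adj (f u) (f v) ∨ f u = f v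

theorem isWeakHom_of_hom (f : G →g H) : IsWeakHom G H f :=
  fun _ _ h => .inl (f.map_adj h)

namespace IsWeakHom

variable {f : V → W} {g : W → V}

theorem edist_le_length (hf : IsWeakHom G H f) {u v : V} (p : G.Walk u v) :
    H.edist (f u) (f v) ≤ p.length := by
  induction p with
  | nil => simp
  | @cons u v w huv p ih =>
    calc H.edist (f u) (f w)
        ≤ H.edist (f u) (f v) + H.edist (f v) (f w) := H.edist_triangle
      _ ≤ 1 + p.length :=
          add_le_add (SimpleGraph.edist_le_one_iff_adj_or_eq.mpr (hf huv)) ih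
      _ = (p.cons huv).length := by rw [SimpleGraph.Walk.length_cons, Nat.cast_succ, add_comm]

theorem edist_le (hf : IsWeakHom G H f) (u v : V) : H.edist (f u) (f v) ≤ G.edist u v :=
  le_iInf hf.edist_le_length

theorem dist_eq_of_leftInverse (hf : IsWeakHom G H f) (hg : IsWeakHom H G g)
    (hgf : Function.LeftInverse g f) (u v : V) : H.dist (f u) (f v) = G.dist u v := by
  have hge : G.edist u v ≤ H.edist (f u) (f v) := by
    simpa only [hgf u, hgf v] using hg.edist_le (f u) (f v)
  exact congrArg ENat.toNat ((hf.edist_le u v).antisymm hge)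

end IsWeakHom

theorem offDiag_map (f : V ↪ W) (s : Finset V) :
    (s.map f).offDiag = s.offDiag.map (f.prodMap f) := by
  ext ⟨x, y⟩
  simp only [Finset.mem_offDiag, Finset.mem_map, Prod.exists, Function.Embedding.coe_prodMap,
    Prod.map_apply, Prod.mk.injEq]
  constructor
  · rintro ⟨⟨a, ha, rfl⟩, ⟨b, hb, rfl⟩, hab⟩
    exact ⟨a, b, ⟨ha, hb, ne_of_apply_ne f hab⟩, rfl, rfl⟩
  · rintro ⟨a, b, ⟨ha, hb, hab⟩, rfl, rfl⟩
    exact ⟨⟨a, ha, rfl⟩, ⟨b, hb, rfl⟩, f.injective.ne hab⟩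

theorem profile_map [DecidableEq V] [DecidableEq W] (f : V ↪ W)
    (hf : ∀ u v, H.dist (f u) (f v) = G.dist u v) (s : Finset V) :
    H.profile (s.map f) = G.profile s := by
  simp only [SimpleGraph.profile, offDiag_map, Finset.map_val, Multiset.map_map,
    Function.comp_def, Function.Embedding.coe_prodMap, Prod.map_fst, Prod.map_snd, hf]

/-- `G` contains two disjoint homometric sets of the same size, which is at least `n`. Equality of
sizes is required separately because a singleton and the empty set both have empty profile. -/
def HasHomometricPair [DecidableEq V] (G : SimpleGraph V) (n : ℕ) : Prop :=
  ∃ A B : Finset V, Disjoint A B ∧ G.profile A = G.profile B ∧ A.card = B.card ∧ n ≤ A.card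

namespace HasHomometricPair

variable [DecidableEq V] [DecidableEq W] {n : ℕ}

theorem of_leftInverse (h : HasHomometricPair G n) {f : V → W} {g : W → V}
    (hf : IsWeakHom G H f) (hg : IsWeakHom H G g) (hgf : Function.LeftInverse g f) :
    HasHomometricPair H n := by
  obtain ⟨A, B, hdisj, hprofile, hcard, hn⟩ := h
  have hdist := hf.dist_eq_of_leftInverse hg hgf
  let e : V ↪ W := ⟨f, hgf.injective⟩
  refine ⟨A.map e, B.map e, Finset.disjoint_map e |>.mpr hdisj, ?_, ?_, ?_⟩
  · rw [profile_map e hdist, profile_map e hdist, hprofile]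
  · rw [Finset.card_map, Finset.card_map, hcard]
  · rwa [Finset.card_map]

theorem of_iso (h : HasHomometricPair G n) (φ : G ≃g H) : HasHomometricPair H n :=
  h.of_leftInverse (isWeakHom_of_hom φ.toHom) (isWeakHom_of_hom φ.symm.toHom) φ.symm_apply_apply

end HasHomometricPair

end Isometry

theorem isWeakHom_rev (n : ℕ) :
    IsWeakHom (SimpleGraph.pathGraph n) (SimpleGraph.pathGraph n) Fin.rev := by
  intro i j hij
  left
  rw [SimpleGraph.pathGraph_adj] at hij ⊢
  simp only [Fin.val_rev]
  omega

theorem hasHomometricPair_pathGraph (n : ℕ) :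
    HasHomometricPair (SimpleGraph.pathGraph n) (n / 2) := by
  let A : Finset (Fin n) := {i | (i : ℕ) < n / 2}
  have hrev := isWeakHom_rev n
  refine ⟨A, A.map Fin.revPerm.toEmbedding, ?_, ?_, (Finset.card_map _).symm, ?_⟩
  · rw [Finset.disjoint_left]
    intro i hi hi'
    obtain ⟨j, hj, rfl⟩ := Finset.mem_map.mp hi'
    simp only [A, Finset.mem_filter_univ, Equiv.coe_toEmbedding, Fin.revPerm_apply,
      Fin.val_rev] at hi hj
    omega
  · exact (profile_map _ (hrev.dist_eq_of_leftInverse hrev Fin.rev_rev) A).symm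
  · rw [Fin.card_filter_val_lt]
    omega

section Haircomb

variable {m : ℕ} (L : Fin m → ℕ)

theorem haircombGraph_adj {a b : Σ i : Fin m, Fin (L i + 1)} :
    (haircombGraph m L).Adj a b ↔
      (a.1 = b.1 ∧ ((a.2 : ℕ) + 1 = b.2 ∨ (b.2 : ℕ) + 1 = a.2)) ∨
        ((SimpleGraph.pathGraph m).Adj a.1 b.1 ∧ a.2 = 0 ∧ b.2 = 0) := by
  simp only [haircombGraph, SimpleGraph.fromRel_adj, SimpleGraph.pathGraph_adj, Fin.ext_iff,
    Fin.val_zero]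
  constructor
  · omega
  · intro h
    refine ⟨?_, by omega⟩
    rintro rfl
    omega

theorem isWeakHom_spine :
    IsWeakHom (SimpleGraph.pathGraph m) (haircombGraph m L) fun i => ⟨i, 0⟩ :=
  fun _ _ hij => .inl ((haircombGraph_adj L).mpr (.inr ⟨hij, rfl, rfl⟩))

theorem isWeakHom_haircombGraph_fst :
    IsWeakHom (haircombGraph m L) (SimpleGraph.pathGraph m) Sigma.fst :=
  fun _ _ hab => ((haircombGraph_adj L).mp hab).symm.imp And.left And.left

theorem hasHomometricPair_haircombGraph_spine : HasHomometricPair (haircombGraph m L) (m / 2) :=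
  (hasHomometricPair_pathGraph m).of_leftInverse (isWeakHom_spine L)
    (isWeakHom_haircombGraph_fst L) fun _ => rfl

theorem isWeakHom_leg (i : Fin m) :
    IsWeakHom (SimpleGraph.pathGraph (L i + 1)) (haircombGraph m L) fun k => ⟨i, k⟩ :=
  fun _ _ hjk => .inl ((haircombGraph_adj L).mpr (.inl ⟨rfl, SimpleGraph.pathGraph_adj.mp hjk⟩))

/-- The retraction of a haircomb onto its `i`-th leg, collapsing all other legs to the root
`(i, 0)`. -/
def legRetraction (i : Fin m) (a : Σ j : Fin m, Fin (L j + 1)) : Fin (L i + 1) :=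
  if h : a.1 = i then a.2.cast (by rw [h]) else 0

theorem legRetraction_leg (i : Fin m) (k : Fin (L i + 1)) : legRetraction L i ⟨i, k⟩ = k :=
  dif_pos rfl

theorem legRetraction_root (i j : Fin m) : legRetraction L i ⟨j, 0⟩ = 0 := by
  unfold legRetraction
  split_ifs <;> rfl

theorem legRetraction_of_ne {i j : Fin m} (hji : j ≠ i) (k : Fin (L j + 1)) :
    legRetraction L i ⟨j, k⟩ = 0 :=
  dif_neg hji

theorem isWeakHom_legRetraction (i : Fin m) :
    IsWeakHom (haircombGraph m L) (SimpleGraph.pathGraph (L i + 1)) (legRetraction L i) := by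
  rintro ⟨j, k⟩ ⟨j', k'⟩ hadj
  obtain ⟨rfl : j = j', hkk'⟩ | ⟨-, rfl : k = 0, rfl : k' = 0⟩ := (haircombGraph_adj L).mp hadj
  · obtain rfl | hji := eq_or_ne j i
    · left
      rwa [legRetraction_leg, legRetraction_leg, SimpleGraph.pathGraph_adj]
    · right
      rw [legRetraction_of_ne L hji, legRetraction_of_ne L hji]
  · right
    rw [legRetraction_root, legRetraction_root]

theorem hasHomometricPair_haircombGraph_leg (i : Fin m) :
    HasHomometricPair (haircombGraph m L) ((L i + 1) / 2) :=
  (hasHomometricPair_pathGraph (L i + 1)).of_leftInverse (isWeakHom_leg L i)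
    (isWeakHom_legRetraction L i) (legRetraction_leg L i)

theorem hasHomometricPair_haircombGraph_longest_leg :
    HasHomometricPair (haircombGraph m L) ((Finset.univ.sup fun i => L i + 1) / 2) := by
  obtain rfl | hm := m.eq_zero_or_pos
  · exact hasHomometricPair_haircombGraph_spine L
  · obtain ⟨i, -, hi⟩ :=
      Finset.univ.exists_mem_eq_sup ⟨⟨0, hm⟩, Finset.mem_univ _⟩ fun i => L i + 1
    rw [hi]
    exact hasHomometricPair_haircombGraph_leg L i

end Haircomb

/-- Every haircomb tree whose spine has `s` vertices and whose longest leg has `l`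
vertices contains a pair of disjoint homometric sets each of size at least `⌊s/2⌋`,
and also a pair of disjoint homometric sets each of size at least `⌊l/2⌋`. -/
theorem haircomb_spine_leg_homometric_sets
    {V : Type} [Fintype V] [DecidableEq V] (G : SimpleGraph V)
    (m : ℕ) (L : Fin m → ℕ) (φ : G ≃g haircombGraph m L)
    (s l : ℕ) (hs : s = m) (hl : l = Finset.univ.sup fun i : Fin m => L i + 1) :
    (∃ A B : Finset V, Disjoint A B ∧ G.profile A = G.profile B ∧ A.card = B.card ∧
      s / 2 ≤ A.card) ∧
    (∃ A B : Finset V, Disjoint A B ∧ G.profile A = G.profile B ∧ A.card = B.card ∧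
      l / 2 ≤ A.card) := by
  subst hs hl
  exact ⟨(hasHomometricPair_haircombGraph_spine L).of_iso φ.symm,
    (hasHomometricPair_haircombGraph_longest_leg L).of_iso φ.symm⟩
end
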